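/- For 1 ≤ k ≤ n, the function (1-p) H'_{k|n}(p)/H_{k|n}(p) is decreasing in p ∈ (0,1). Equivalently, the ratio N(p)/D(p) is increasing in p ∈ (0,1), where N(p) = ∫₀¹ u^{k-1}((1-up)/(1-p))^{n-k-1}((1-u)/(1-p)) du and D(p) = ∫₀¹ u^{k-1}((1-up)/(1-p))^{n-k} du. -/

import Mathlib

noncomputable def koonB (k n : ℕ) : ℝ :=
  ∫ u in (0:ℝ)..1, u ^ (k - 1) * (1 - u) ^ (n - k)

noncomputable def koonRel (k n : ℕ) (p : ℝ) : ℝ :=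
  (1 / koonB k n) * ∫ u in (0:ℝ)..p, u ^ (k - 1) * (1 - u) ^ (n - k)

noncomputable def koonH (k n : ℕ) (p : ℝ) : ℝ :=
  p * (p ^ (k - 1) * (1 - p) ^ (n - k) / koonB k n) / koonRel k n p

/-!
Substituting `u ↦ u * p` in the incomplete beta integral gives `H = 1 / D` on `(0, 1)`, and
`(1 - p) * D' = (n - k) * N`, so `(1 - p) * H' / H = -(n - k) * N / D` and both claims reduce to the
monotonicity of `N / D`. Since `(1 - u * p) / (1 - p) = u + (1 - u) / (1 - p)`, for `k < n` one has
`N / D = (1 - r) / (1 - r * p)`, where `r(p)` is the mean of `u` under the density proportional to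
`u ^ (k - 1) * ((1 - u * p) / (1 - p)) ^ (n - k - 1)` on `[0, 1]`. This family of densities has
decreasing likelihood ratios in `p`, so `r` decreases, and `(1 - r) / (1 - r * p)` increases in `p`
and decreases in `r`.
-/

open Filter MeasureTheory Set
open scoped Topology

section BasicComposition

variable {α : Type*} [MeasurableSpace α] {μ : Measure α} [SFinite μ] {f g h k : α → ℝ}

/- Andréief's identity for determinants of order two. -/
lemma integral_prod_det_mul_det (hfh : Integrable (fun x => f x * h x) μ)
    (hfk : Integrable (fun x => f x * k x) μ) (hgh : Integrable (fun x => g x * h x) μ)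
    (hgk : Integrable (fun x => g x * k x) μ) :
    ∫ z, (f z.1 * g z.2 - f z.2 * g z.1) * (h z.1 * k z.2 - h z.2 * k z.1) ∂μ.prod μ =
      2 * ((∫ x, f x * h x ∂μ) * (∫ x, g x * k x ∂μ) -
        (∫ x, f x * k x ∂μ) * ∫ x, g x * h x ∂μ) := by
  have hdiag := (hfh.mul_prod hgk).fun_add (hgk.mul_prod hfh)
  have hanti := (hfk.mul_prod hgh).fun_add (hgh.mul_prod hfk)
  calc
    _ = ∫ z, (f z.1 * h z.1 * (g z.2 * k z.2) + g z.1 * k z.1 * (f z.2 * h z.2)) -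
          (f z.1 * k z.1 * (g z.2 * h z.2) + g z.1 * h z.1 * (f z.2 * k z.2)) ∂μ.prod μ := by
      congr 1 with z
      ring
    _ = (∫ x, f x * h x ∂μ) * (∫ x, g x * k x ∂μ) + (∫ x, g x * k x ∂μ) * (∫ x, f x * h x ∂μ) -
          ((∫ x, f x * k x ∂μ) * (∫ x, g x * h x ∂μ) +
            (∫ x, g x * h x ∂μ) * ∫ x, f x * k x ∂μ) := by
      rw [integral_sub hdiag hanti, integral_add (hfh.mul_prod hgk) (hgk.mul_prod hfh),
        integral_add (hfk.mul_prod hgh) (hgh.mul_prod hfk)]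
      simp only [← integral_prod_mul]
    _ = _ := by ring

/- The hypotheses say that `f / g` and `h / k` are antitone, without dividing. -/
lemma setIntegral_mul_mul_setIntegral_mul_le_of_cross_le [LinearOrder α] {s : Set α}
    (hs : MeasurableSet s)
    (hfg : ∀ x ∈ s, ∀ y ∈ s, x ≤ y → f y * g x ≤ f x * g y)
    (hhk : ∀ x ∈ s, ∀ y ∈ s, x ≤ y → h y * k x ≤ h x * k y)
    (hfh : IntegrableOn (fun x => f x * h x) s μ) (hfk : IntegrableOn (fun x => f x * k x) s μ)
    (hgh : IntegrableOn (fun x => g x * h x) s μ) (hgk : IntegrableOn (fun x => g x * k x) s μ) :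
    (∫ x in s, f x * k x ∂μ) * (∫ x in s, g x * h x ∂μ) ≤
      (∫ x in s, f x * h x ∂μ) * ∫ x in s, g x * k x ∂μ := by
  have hdet : ∀ z ∈ s ×ˢ s,
      0 ≤ (f z.1 * g z.2 - f z.2 * g z.1) * (h z.1 * k z.2 - h z.2 * k z.1) := by
    rintro ⟨x, y⟩ ⟨hx, hy⟩
    rcases le_total x y with hxy | hyx
    · exact mul_nonneg (sub_nonneg.2 (hfg x hx y hy hxy)) (sub_nonneg.2 (hhk x hx y hy hxy))
    · exact mul_nonneg_of_nonpos_of_nonpos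
        (sub_nonpos.2 (hfg y hy x hx hyx)) (sub_nonpos.2 (hhk y hy x hx hyx))
  have hnonneg := setIntegral_nonneg (μ := μ.prod μ) (hs.prod hs) hdet
  rw [← Measure.prod_restrict, integral_prod_det_mul_det hfh hfk hgh hgk] at hnonneg
  linarith

end BasicComposition

/-- The integral `D(p)` of the paper, with `a = k - 1` and `m = n - k`; it is the reciprocal of
`H_{k|n}(p)`. -/
noncomputable def koonDen (a m : ℕ) (p : ℝ) : ℝ :=
  ∫ u in (0:ℝ)..1, u ^ a * ((1 - u * p) / (1 - p)) ^ m

/-- The integral `N(p)` of the paper, with `a = k - 1` and `j = n - k - 1`; up to a factor it is the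
derivative of `D(p)`, see `hasDerivAt_koonDen`. -/
noncomputable def koonNum (a j : ℕ) (p : ℝ) : ℝ :=
  ∫ u in (0:ℝ)..1, u ^ a * ((1 - u * p) / (1 - p)) ^ j * ((1 - u) / (1 - p))

lemma one_sub_mul_pos {u p : ℝ} (hu : u ∈ Icc 0 1) (hp : p < 1) : 0 < 1 - u * p := by
  nlinarith [hu.1, hu.2, mul_nonneg hu.1 (sub_nonneg.2 hp.le)]

lemma one_sub_mul_div_one_sub_pos {u p : ℝ} (hu : u ∈ Icc 0 1) (hp : p < 1) :
    0 < (1 - u * p) / (1 - p) :=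
  div_pos (one_sub_mul_pos hu hp) (sub_pos.2 hp)

lemma one_sub_mul_div_cross_le {p q x y : ℝ} (hpq : p ≤ q) (hq : q < 1) (hxy : x ≤ y) :
    (1 - y * q) / (1 - q) * ((1 - x * p) / (1 - p)) ≤
      (1 - x * q) / (1 - q) * ((1 - y * p) / (1 - p)) := by
  rw [div_mul_div_comm, div_mul_div_comm]
  refine div_le_div_of_nonneg_right ?_ (mul_pos (sub_pos.2 hq) (sub_pos.2 (hpq.trans_lt hq))).le
  linear_combination mul_nonneg (sub_nonneg.2 hpq) (sub_nonneg.2 hxy)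

lemma koonDen_zero_right (a : ℕ) (p : ℝ) : koonDen a 0 p = (a + 1 : ℝ)⁻¹ := by
  simp [koonDen]

lemma koonDen_pos (a m : ℕ) {p : ℝ} (hp : p < 1) : 0 < koonDen a m p := by
  refine intervalIntegral.intervalIntegral_pos_of_pos_on
    (Continuous.intervalIntegrable (by fun_prop) _ _) (fun u hu => ?_) zero_lt_one
  exact mul_pos (pow_pos hu.1 a)
    (pow_pos (one_sub_mul_div_one_sub_pos (Ioo_subset_Icc_self hu) hp) m)

lemma koonDen_succ_left_le (a m : ℕ) {p : ℝ} (hp : p < 1) :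
    koonDen (a + 1) m p ≤ koonDen a m p := by
  refine intervalIntegral.integral_mono_on zero_le_one
    (Continuous.intervalIntegrable (by fun_prop) _ _)
    (Continuous.intervalIntegrable (by fun_prop) _ _) fun u hu => ?_
  exact mul_le_mul_of_nonneg_right (pow_le_pow_of_le_one hu.1 hu.2 a.le_succ)
    (pow_nonneg (one_sub_mul_div_one_sub_pos hu hp).le m)

lemma koonNum_eq_sub_div (a j : ℕ) (p : ℝ) :
    koonNum a j p = (koonDen a j p - koonDen (a + 1) j p) / (1 - p) := by
  rw [koonNum, koonDen, koonDen,
    ← intervalIntegral.integral_sub (Continuous.intervalIntegrable (by fun_prop) _ _)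
      (Continuous.intervalIntegrable (by fun_prop) _ _), ← intervalIntegral.integral_div]
  congr 1 with u
  ring

lemma koonDen_succ_right (a m : ℕ) {p : ℝ} (hp : p ≠ 1) :
    koonDen a (m + 1) p = koonDen (a + 1) m p + koonNum a m p := by
  have hp' : 1 - p ≠ 0 := sub_ne_zero.2 hp.symm
  rw [koonNum, koonDen, koonDen,
    ← intervalIntegral.integral_add (Continuous.intervalIntegrable (by fun_prop) _ _)
      (Continuous.intervalIntegrable (by fun_prop) _ _)]
  congr 1 with u
  have hsplit : (1 - u * p) / (1 - p) = u + (1 - u) / (1 - p) := by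
    field_simp
    ring
  rw [pow_succ, pow_succ]
  linear_combination u ^ a * ((1 - u * p) / (1 - p)) ^ m * hsplit

lemma koonNum_succ (a j : ℕ) {p : ℝ} (hp : p ≠ 1) :
    koonNum a (j + 1) p =
      koonNum (a + 1) j p + (koonNum a j p - koonNum (a + 1) j p) / (1 - p) := by
  rw [koonNum_eq_sub_div, koonDen_succ_right a j hp, koonDen_succ_right (a + 1) j hp,
    koonNum_eq_sub_div (a + 1)]
  ring

/- Induction through the recurrence in `m` avoids differentiating under the integral sign. -/
lemma hasDerivAt_koonDen (a m : ℕ) {p : ℝ} (hp : p ≠ 1) :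
    HasDerivAt (koonDen a m) (m * koonNum a (m - 1) p / (1 - p)) p := by
  have hp' : 1 - p ≠ 0 := sub_ne_zero.2 hp.symm
  induction m generalizing a with
  | zero => simpa [funext (koonDen_zero_right a)] using hasDerivAt_const p (a + 1 : ℝ)⁻¹
  | succ m ih =>
    have hrec : koonDen a (m + 1) =ᶠ[𝓝 p]
        fun x => koonDen (a + 1) m x + (koonDen a m x - koonDen (a + 1) m x) / (1 - x) := by
      filter_upwards [isOpen_ne.mem_nhds hp] with x hx
      rw [koonDen_succ_right a m hx, koonNum_eq_sub_div]
    have hnum : m * koonNum a m p = m * (koonNum (a + 1) (m - 1) p +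
        (koonNum a (m - 1) p - koonNum (a + 1) (m - 1) p) / (1 - p)) := by
      cases m with
      | zero => simp
      | succ j => rw [koonNum_succ a j hp, Nat.add_sub_cancel]
    have hderiv := (ih (a + 1)).add
      (((ih a).sub (ih (a + 1))).div ((hasDerivAt_id p).const_sub 1) hp')
    refine (hderiv.congr_of_eventuallyEq hrec).congr_deriv ?_
    have hdiff := koonNum_eq_sub_div a m p
    simp only [Nat.add_sub_cancel, Nat.cast_add_one, id_eq, Pi.sub_apply]
    field_simp at hnum hdiff ⊢
    linear_combination -hnum - hdiff

lemma koonDen_succ_left_div_antitoneOn (a m : ℕ) :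
    AntitoneOn (fun p => koonDen (a + 1) m p / koonDen a m p) (Iio 1) := by
  intro p hp q hq hpq
  have hcross : koonDen a m p * koonDen (a + 1) m q ≤ koonDen a m q * koonDen (a + 1) m p := by
    simp only [koonDen, intervalIntegral.integral_of_le zero_le_one, ← integral_Icc_eq_integral_Ioc]
    refine setIntegral_mul_mul_setIntegral_mul_le_of_cross_le measurableSet_Icc
      (fun x hx y hy hxy => ?_) (fun x hx y hy hxy => ?_)
      (Continuous.integrableOn_Icc (by fun_prop)) (Continuous.integrableOn_Icc (by fun_prop))
      (Continuous.integrableOn_Icc (by fun_prop)) (Continuous.integrableOn_Icc (by fun_prop))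
    · calc
        y ^ a * x ^ (a + 1) = x ^ a * y ^ a * x := by ring
        _ ≤ x ^ a * y ^ a * y :=
          mul_le_mul_of_nonneg_left hxy (mul_nonneg (pow_nonneg hx.1 a) (pow_nonneg hy.1 a))
        _ = x ^ a * y ^ (a + 1) := by ring
    · rw [← mul_pow, ← mul_pow]
      exact pow_le_pow_left₀
        (mul_pos (one_sub_mul_div_one_sub_pos hy hq) (one_sub_mul_div_one_sub_pos hx hp)).le
        (one_sub_mul_div_cross_le hpq hq hxy) m
  change _ / _ ≤ _ / _
  rw [div_le_div_iff₀ (koonDen_pos a m hq) (koonDen_pos a m hp)]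
  linarith

lemma one_sub_div_one_sub_mul_le {p q r s : ℝ} (hpq : p ≤ q) (hq : q < 1) (hs : 0 ≤ s)
    (hsr : s ≤ r) (hr : r ≤ 1) : (1 - r) / (1 - r * p) ≤ (1 - s) / (1 - s * q) := by
  have hp : p < 1 := hpq.trans_lt hq
  rw [div_le_div_iff₀ (one_sub_mul_pos ⟨hs.trans hsr, hr⟩ hp)
    (one_sub_mul_pos ⟨hs, hsr.trans hr⟩ hq)]
  linear_combination mul_nonneg (sub_nonneg.2 hp.le) (sub_nonneg.2 hsr) +
    mul_nonneg (mul_nonneg (sub_nonneg.2 hpq) hs) (sub_nonneg.2 hr)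

lemma koonNum_div_koonDen_zero_monotoneOn (a : ℕ) :
    MonotoneOn (fun p => koonNum a 0 p / koonDen a 0 p) (Iio 1) := by
  intro p _ q hq hpq
  have hconst (b : ℕ) : koonDen b 0 p = koonDen b 0 q := by simp only [koonDen_zero_right]
  simp only [koonNum_eq_sub_div, hconst]
  have hden := koonDen_pos a 0 hq
  have hsub := sub_nonneg.2 (koonDen_succ_left_le a 0 hq)
  have hq' : 0 < 1 - q := sub_pos.2 hq
  gcongr

lemma koonNum_div_koonDen_succ_eq (a j : ℕ) {p : ℝ} (hp : p < 1) :
    koonNum a j p / koonDen a (j + 1) p =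
      (1 - koonDen (a + 1) j p / koonDen a j p) /
        (1 - koonDen (a + 1) j p / koonDen a j p * p) := by
  have hp' : 1 - p ≠ 0 := (sub_pos.2 hp).ne'
  have hden := (koonDen_pos a j hp).ne'
  rw [koonDen_succ_right a j hp.ne, koonNum_eq_sub_div]
  field_simp
  congr 1
  ring

lemma koonNum_div_koonDen_succ_monotoneOn (a j : ℕ) :
    MonotoneOn (fun p => koonNum a j p / koonDen a (j + 1) p) (Iio 1) := by
  intro p hp q hq hpq
  simp only [koonNum_div_koonDen_succ_eq a j hp, koonNum_div_koonDen_succ_eq a j hq]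
  exact one_sub_div_one_sub_mul_le hpq hq
    (div_pos (koonDen_pos (a + 1) j hq) (koonDen_pos a j hq)).le
    (koonDen_succ_left_div_antitoneOn a j hp hq hpq)
    ((div_le_one (koonDen_pos a j hp)).2 (koonDen_succ_left_le a j hp))

lemma koonNum_div_koonDen_monotoneOn (a m : ℕ) :
    MonotoneOn (fun p => koonNum a (m - 1) p / koonDen a m p) (Iio 1) := by
  cases m with
  | zero => exact koonNum_div_koonDen_zero_monotoneOn a
  | succ j => exact koonNum_div_koonDen_succ_monotoneOn a j

lemma koonB_pos (k n : ℕ) : 0 < koonB k n :=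
  intervalIntegral.intervalIntegral_pos_of_pos_on
    (Continuous.intervalIntegrable (by fun_prop) _ _)
    (fun _ hu => mul_pos (pow_pos hu.1 _) (pow_pos (sub_pos.2 hu.2) _)) zero_lt_one

lemma integral_pow_mul_one_sub_pow_eq (a m : ℕ) {p : ℝ} (hp : p ≠ 1) :
    ∫ u in (0:ℝ)..p, u ^ a * (1 - u) ^ m = p ^ (a + 1) * (1 - p) ^ m * koonDen a m p := by
  calc
    ∫ u in (0:ℝ)..p, u ^ a * (1 - u) ^ m
        = p * ∫ u in (0:ℝ)..1, (u * p) ^ a * (1 - u * p) ^ m := by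
      simpa using (intervalIntegral.mul_integral_comp_mul_right (a := 0) (b := 1)
        (f := fun u : ℝ => u ^ a * (1 - u) ^ m) p).symm
    _ = p ^ (a + 1) * (1 - p) ^ m * koonDen a m p := by
      rw [koonDen, ← intervalIntegral.integral_const_mul, ← intervalIntegral.integral_const_mul]
      congr 1 with u
      rw [div_pow, mul_pow, pow_succ]
      field_simp

lemma koonH_eq_inv_koonDen (k n : ℕ) {p : ℝ} (hp₀ : p ≠ 0) (hp₁ : p ≠ 1) :
    koonH k n p = (koonDen (k - 1) (n - k) p)⁻¹ := by
  have hB := (koonB_pos k n).ne'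
  rw [koonH, koonRel, integral_pow_mul_one_sub_pow_eq _ _ hp₁, pow_succ]
  field_simp

lemma one_sub_mul_deriv_koonH_div (k n : ℕ) {p H' : ℝ} (hp : p ∈ Ioo 0 1)
    (hH' : HasDerivAt (koonH k n) H' p) :
    (1 - p) * H' / koonH k n p =
      -(((n - k : ℕ) : ℝ) * (koonNum (k - 1) (n - k - 1) p / koonDen (k - 1) (n - k) p)) := by
  have hp' : 1 - p ≠ 0 := (sub_pos.2 hp.2).ne'
  have hden := (koonDen_pos (k - 1) (n - k) hp.2).ne'
  have heq : koonH k n =ᶠ[𝓝 p] (koonDen (k - 1) (n - k))⁻¹ := by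
    filter_upwards [isOpen_Ioo.mem_nhds hp] with x hx
    exact koonH_eq_inv_koonDen k n hx.1.ne' hx.2.ne
  have hderiv := ((hasDerivAt_koonDen (k - 1) (n - k) hp.2.ne).inv hden).congr_of_eventuallyEq heq
  rw [hH'.unique hderiv, heq.eq_of_nhds, Pi.inv_apply]
  field_simp

theorem koonH_log_deriv_decreasing (k n : ℕ) (hk : 1 ≤ k) (hkn : k ≤ n)
    (H' : ℝ → ℝ) (hH' : ∀ p ∈ Set.Ioo (0 : ℝ) 1, HasDerivAt (koonH k n) (H' p) p) :
    AntitoneOn (fun p => (1 - p) * H' p / koonH k n p) (Set.Ioo (0 : ℝ) 1) ∧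
      MonotoneOn (fun p =>
        (∫ u in (0:ℝ)..1, u ^ (k - 1) * ((1 - u * p) / (1 - p)) ^ (n - k - 1)
            * ((1 - u) / (1 - p))) /
        (∫ u in (0:ℝ)..1, u ^ (k - 1) * ((1 - u * p) / (1 - p)) ^ (n - k)))
        (Set.Ioo (0 : ℝ) 1) := by
  have hmono := (koonNum_div_koonDen_monotoneOn (k - 1) (n - k)).mono
    (Ioo_subset_Iio_self : Ioo (0 : ℝ) 1 ⊆ Iio 1)
  refine ⟨fun p hp q hq hpq => ?_, hmono⟩
  simp only [one_sub_mul_deriv_koonH_div k n hp (hH' p hp),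
    one_sub_mul_deriv_koonH_div k n hq (hH' q hq)]
  exact neg_le_neg (mul_le_mul_of_nonneg_left (hmono hp hq hpq) (Nat.cast_nonneg _))
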